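/- Let 0 ≤ q < 1 and let Ω ∈ U_q(s_p, M_p) be a p×p matrix with inverse Σ = Ω^{-1}. Let Σ̂ ∈ ℝ^{p×p} be a symmetric matrix and let λ ≥ 0 satisfy λ ≥ 3‖Ω‖_{L1}‖Σ̂ − Σ‖_∞ and ‖Ω‖_{L1}^{−q} λ^{1−q} s_p ≤ 1/2. Fix i ∈ {1,…,p} and set β* = Ω e_i (the i-th column of Ω, where e_i is the i-th standard basis vector). Then every global minimizer β̂ over ℝ^p of the function β ↦ (1/2)βᵀΣ̂β − e_iᵀβ + λ|β|_1 satisfies |β̂ − β*|_∞ ≤ 4 ‖Ω‖_{L1} λ. -/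

import Mathlib

/-!
Write `L = ‖Ω‖_{L1}`, `Σ = Ω⁻¹`, `δ = ‖Σ̂ - Σ‖_∞` and `β* = Ω e`, where `|e|_1 ≤ 1`. Then
`β̂ - β* = Ω ((Σ̂ β̂ - e) - (Σ̂ - Σ) β̂)`, and stationarity of `β̂` gives `|Σ̂ β̂ - e|_∞ ≤ λ`, so
`|β̂ - β*|_∞ ≤ L (λ + δ |β̂|_1)`. A global minimizer exists only if `Σ̂` is positive
semidefinite. Comparing the objective at `β̂` and `β*`, where the smooth part has gradient
`(Σ̂ - Σ) β*` of size at most `δ L ≤ λ / 3`, then gives `λ |β̂|_1 ≤ 2 λ |β*|_1 ≤ 2 L λ`. Keeping the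
factor `λ` covers `λ = 0`, and it suffices because `L δ |β̂|_1 ≤ (λ / 3) |β̂|_1 ≤ (2 / 3) L λ`.
-/

open Matrix
open scoped BigOperators

/-- The ℓ1 norm of a vector in ℝ^p. -/
noncomputable def vecL1 {p : ℕ} (a : Fin p → ℝ) : ℝ := ∑ i, |a i|

/-- The ℓ∞ norm of a vector in ℝ^p. -/
noncomputable def vecLinf {p : ℕ} (a : Fin p → ℝ) : ℝ := ⨆ i, |a i|

/-- The entrywise supremum norm of a p×p matrix. -/
noncomputable def matLinf {p : ℕ} (A : Matrix (Fin p) (Fin p) ℝ) : ℝ := ⨆ i, ⨆ j, |A i j|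

/-- The maximum absolute column-sum norm of a p×p matrix. -/
noncomputable def matL1 {p : ℕ} (A : Matrix (Fin p) (Fin p) ℝ) : ℝ := ⨆ j, ∑ i, |A i j|

/-- The SCIO objective function β ↦ (1/2)βᵀ Σ̂ β − eᵀβ + λ|β|₁. -/
noncomputable def scioObj {p : ℕ} (S : Matrix (Fin p) (Fin p) ℝ) (e : Fin p → ℝ)
    (lam : ℝ) (β : Fin p → ℝ) : ℝ :=
  (1 / 2) * (β ⬝ᵥ S.mulVec β) - e ⬝ᵥ β + lam * vecL1 β

section Norms

variable {p : ℕ}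

theorem vecL1_nonneg (a : Fin p → ℝ) : 0 ≤ vecL1 a :=
  Finset.sum_nonneg fun _ _ => abs_nonneg _

theorem vecL1_add_le (a b : Fin p → ℝ) : vecL1 (a + b) ≤ vecL1 a + vecL1 b := by
  rw [vecL1, vecL1, vecL1, ← Finset.sum_add_distrib]
  exact Finset.sum_le_sum fun i _ => abs_add_le (a i) (b i)

theorem vecL1_sub_le (a b : Fin p → ℝ) : vecL1 (a - b) ≤ vecL1 a + vecL1 b := by
  rw [vecL1, vecL1, vecL1, ← Finset.sum_add_distrib]
  exact Finset.sum_le_sum fun i _ => abs_sub (a i) (b i)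

theorem vecL1_smul (t : ℝ) (a : Fin p → ℝ) : vecL1 (t • a) = |t| * vecL1 a := by
  simp only [vecL1, Pi.smul_apply, smul_eq_mul, abs_mul, Finset.mul_sum]

theorem vecL1_single (i : Fin p) (x : ℝ) : vecL1 (Pi.single i x) = |x| := by
  simp only [vecL1, Pi.single_apply, apply_ite abs, abs_zero, Finset.sum_ite_eq',
    Finset.mem_univ, if_true]

theorem vecLinf_nonneg (a : Fin p → ℝ) : 0 ≤ vecLinf a :=
  Real.iSup_nonneg fun _ => abs_nonneg _

theorem abs_apply_le_vecLinf (a : Fin p → ℝ) (i : Fin p) : |a i| ≤ vecLinf a :=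
  le_ciSup (f := fun i => |a i|) (Set.finite_range _).bddAbove i

theorem vecLinf_le {a : Fin p → ℝ} {c : ℝ} (hc : 0 ≤ c) (h : ∀ i, |a i| ≤ c) : vecLinf a ≤ c :=
  Real.iSup_le h hc

theorem vecLinf_sub_le (a b : Fin p → ℝ) : vecLinf (a - b) ≤ vecLinf a + vecLinf b :=
  vecLinf_le (add_nonneg (vecLinf_nonneg a) (vecLinf_nonneg b)) fun i =>
    (abs_sub _ _).trans (add_le_add (abs_apply_le_vecLinf a i) (abs_apply_le_vecLinf b i))

theorem abs_dotProduct_le_vecL1_mul_vecLinf (a b : Fin p → ℝ) :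
    |a ⬝ᵥ b| ≤ vecL1 a * vecLinf b := by
  rw [vecL1, Finset.sum_mul]
  refine (Finset.abs_sum_le_sum_abs _ _).trans (Finset.sum_le_sum fun i _ => ?_)
  rw [abs_mul]
  exact mul_le_mul_of_nonneg_left (abs_apply_le_vecLinf b i) (abs_nonneg _)

theorem vecLinf_le_of_forall_dotProduct {a : Fin p → ℝ} {c : ℝ} (hc : 0 ≤ c)
    (h : ∀ v, 0 ≤ v ⬝ᵥ a + c * vecL1 v) : vecLinf a ≤ c := by
  refine vecLinf_le hc fun i => abs_le.2 ?_
  have hpos := h (Pi.single i 1)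
  have hneg := h (Pi.single i (-1))
  simp only [single_dotProduct, vecL1_single, abs_neg, abs_one] at hpos hneg
  constructor <;> linarith

theorem matLinf_nonneg (A : Matrix (Fin p) (Fin p) ℝ) : 0 ≤ matLinf A :=
  Real.iSup_nonneg fun i => vecLinf_nonneg (A i)

theorem vecLinf_row_le_matLinf (A : Matrix (Fin p) (Fin p) ℝ) (i : Fin p) :
    vecLinf (A i) ≤ matLinf A :=
  le_ciSup (f := fun i => vecLinf (A i)) (Set.finite_range _).bddAbove i

theorem matL1_nonneg (A : Matrix (Fin p) (Fin p) ℝ) : 0 ≤ matL1 A :=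
  Real.iSup_nonneg fun j => vecL1_nonneg (A.col j)

theorem vecL1_col_le_matL1 (A : Matrix (Fin p) (Fin p) ℝ) (j : Fin p) :
    vecL1 (A.col j) ≤ matL1 A :=
  le_ciSup (f := fun j => vecL1 (A.col j)) (Set.finite_range _).bddAbove j

theorem vecLinf_mulVec_le (A : Matrix (Fin p) (Fin p) ℝ) (v : Fin p → ℝ) :
    vecLinf (A *ᵥ v) ≤ matLinf A * vecL1 v := by
  refine vecLinf_le (mul_nonneg (matLinf_nonneg A) (vecL1_nonneg v)) fun i => ?_
  calc |(A *ᵥ v) i| = |v ⬝ᵥ A i| := by rw [mulVec, dotProduct_comm]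
    _ ≤ vecL1 v * vecLinf (A i) := abs_dotProduct_le_vecL1_mul_vecLinf v (A i)
    _ ≤ vecL1 v * matLinf A :=
        mul_le_mul_of_nonneg_left (vecLinf_row_le_matLinf A i) (vecL1_nonneg v)
    _ = matLinf A * vecL1 v := mul_comm _ _

theorem vecLinf_vecMul_le (v : Fin p → ℝ) (A : Matrix (Fin p) (Fin p) ℝ) :
    vecLinf (v ᵥ* A) ≤ matL1 A * vecLinf v := by
  refine vecLinf_le (mul_nonneg (matL1_nonneg A) (vecLinf_nonneg v)) fun j => ?_
  calc |(v ᵥ* A) j| = |A.col j ⬝ᵥ v| := by rw [vecMul, dotProduct_comm]; rfl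
    _ ≤ vecL1 (A.col j) * vecLinf v := abs_dotProduct_le_vecL1_mul_vecLinf (A.col j) v
    _ ≤ matL1 A * vecLinf v :=
        mul_le_mul_of_nonneg_right (vecL1_col_le_matL1 A j) (vecLinf_nonneg v)

theorem vecL1_mulVec_le (A : Matrix (Fin p) (Fin p) ℝ) (v : Fin p → ℝ) :
    vecL1 (A *ᵥ v) ≤ matL1 A * vecL1 v :=
  calc vecL1 (A *ᵥ v) ≤ ∑ i, ∑ j, |A i j| * |v j| :=
        Finset.sum_le_sum fun i _ => by
          simpa only [mulVec, dotProduct, abs_mul]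
            using Finset.abs_sum_le_sum_abs (fun j => A i j * v j) Finset.univ
    _ = ∑ j, vecL1 (A.col j) * |v j| := by
        rw [Finset.sum_comm]
        simp only [vecL1, Finset.sum_mul, col_apply]
    _ ≤ ∑ j, matL1 A * |v j| :=
        Finset.sum_le_sum fun j _ =>
          mul_le_mul_of_nonneg_right (vecL1_col_le_matL1 A j) (abs_nonneg _)
    _ = matL1 A * vecL1 v := (Finset.mul_sum _ _ _).symm

end Norms

theorem nonneg_of_forall_pos_mul_add {a c : ℝ} (h : ∀ t, 0 < t → 0 ≤ t * a + c) : 0 ≤ c := by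
  have hlim : Filter.Tendsto (fun t : ℝ => t * a + c) (nhdsWithin 0 (Set.Ioi 0)) (nhds c) :=
    (Continuous.tendsto' (by fun_prop) 0 c (by ring)).mono_left nhdsWithin_le_nhds
  exact ge_of_tendsto hlim (Filter.eventually_of_mem self_mem_nhdsWithin h)

theorem scioObj_add {p : ℕ} {S : Matrix (Fin p) (Fin p) ℝ} (hS : S.IsSymm) (e : Fin p → ℝ)
    (lam : ℝ) (β v : Fin p → ℝ) :
    scioObj S e lam (β + v) = scioObj S e lam β + (1 / 2) * (v ⬝ᵥ S *ᵥ v)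
      + v ⬝ᵥ (S *ᵥ β - e) + lam * (vecL1 (β + v) - vecL1 β) := by
  have hcross : β ⬝ᵥ S *ᵥ v = v ⬝ᵥ S *ᵥ β := by
    rw [dotProduct_mulVec, ← mulVec_transpose, hS.eq, dotProduct_comm]
  simp only [scioObj, mulVec_add, dotProduct_add, add_dotProduct, dotProduct_sub, hcross,
    dotProduct_comm v e]
  ring

section Minimizer

variable {p : ℕ} {S : Matrix (Fin p) (Fin p) ℝ} {e : Fin p → ℝ} {lam : ℝ} {β : Fin p → ℝ}

theorem nonneg_along_ray_of_scioObj_min (hS : S.IsSymm) (hlam : 0 ≤ lam)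
    (hmin : ∀ γ, scioObj S e lam β ≤ scioObj S e lam γ) (v : Fin p → ℝ) {t : ℝ} (ht : 0 < t) :
    0 ≤ t * ((1 / 2) * (v ⬝ᵥ S *ᵥ v)) + (v ⬝ᵥ (S *ᵥ β - e) + lam * vecL1 v) := by
  have hray := hmin (β + t • v)
  rw [scioObj_add hS] at hray
  simp only [mulVec_smul, dotProduct_smul, smul_dotProduct, smul_eq_mul] at hray
  have hpenalty : lam * (vecL1 (β + t • v) - vecL1 β) ≤ lam * (t * vecL1 v) := by
    refine mul_le_mul_of_nonneg_left (sub_le_iff_le_add'.2 ?_) hlam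
    simpa only [vecL1_smul, abs_of_pos ht] using vecL1_add_le β (t • v)
  refine nonneg_of_mul_nonneg_right ?_ ht
  linarith

theorem vecLinf_gradient_le_of_scioObj_min (hS : S.IsSymm) (hlam : 0 ≤ lam)
    (hmin : ∀ γ, scioObj S e lam β ≤ scioObj S e lam γ) : vecLinf (S *ᵥ β - e) ≤ lam :=
  vecLinf_le_of_forall_dotProduct hlam fun v =>
    nonneg_of_forall_pos_mul_add fun _ => nonneg_along_ray_of_scioObj_min hS hlam hmin v

theorem posSemidef_of_scioObj_min (hS : S.IsSymm) (hlam : 0 ≤ lam)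
    (hmin : ∀ γ, scioObj S e lam β ≤ scioObj S e lam γ) : S.PosSemidef := by
  refine .of_dotProduct_mulVec_nonneg (isHermitian_iff_isSymm.2 hS) fun v => ?_
  have hquad : 0 ≤ (1 / 2) * (v ⬝ᵥ S *ᵥ v) :=
    nonneg_of_forall_pos_mul_add (a := v ⬝ᵥ (S *ᵥ β - e) + lam * vecL1 v) fun t ht => by
      have hray := mul_nonneg ht.le
        (nonneg_along_ray_of_scioObj_min hS hlam hmin v (inv_pos.2 ht))
      rwa [mul_add, mul_inv_cancel_left₀ ht.ne', add_comm] at hray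
  rw [star_trivial]
  linarith

theorem vecL1_sub_vecL1_le_of_scioObj_le (hS : S.PosSemidef) {γ : Fin p → ℝ}
    (hle : scioObj S e lam β ≤ scioObj S e lam γ) :
    lam * (vecL1 β - vecL1 γ) ≤ vecLinf (S *ᵥ γ - e) * (vecL1 β + vecL1 γ) := by
  have hexpand := scioObj_add (isHermitian_iff_isSymm.1 hS.isHermitian) e lam γ (β - γ)
  rw [add_sub_cancel] at hexpand
  have hquad : 0 ≤ (β - γ) ⬝ᵥ S *ᵥ (β - γ) := by
    simpa only [star_trivial] using hS.dotProduct_mulVec_nonneg (β - γ)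
  have hlin := neg_le_of_abs_le (abs_dotProduct_le_vecL1_mul_vecLinf (β - γ) (S *ᵥ γ - e))
  have htri := mul_le_mul_of_nonneg_right (vecL1_sub_le β γ) (vecLinf_nonneg (S *ᵥ γ - e))
  linarith

end Minimizer

section Perturbation

variable {p : ℕ} {Ω : Matrix (Fin p) (Fin p) ℝ}

theorem vecLinf_mulVec_mulVec_sub_le (hΩ : IsUnit Ω) (S : Matrix (Fin p) (Fin p) ℝ)
    (e : Fin p → ℝ) :
    vecLinf (S *ᵥ (Ω *ᵥ e) - e) ≤ matLinf (S - Ω⁻¹) * vecL1 (Ω *ᵥ e) := by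
  have hresidual : S *ᵥ (Ω *ᵥ e) - e = (S - Ω⁻¹) *ᵥ (Ω *ᵥ e) := by
    rw [sub_mulVec, mulVec_mulVec e Ω⁻¹, nonsing_inv_mul _ ((isUnit_iff_isUnit_det _).1 hΩ),
      one_mulVec]
  rw [hresidual]
  exact vecLinf_mulVec_le _ _

theorem vecLinf_sub_mulVec_le (hΩsymm : Ω.IsSymm) (hΩ : IsUnit Ω)
    (S : Matrix (Fin p) (Fin p) ℝ) (e β : Fin p → ℝ) :
    vecLinf (β - Ω *ᵥ e)
      ≤ matL1 Ω * (vecLinf (S *ᵥ β - e) + matLinf (S - Ω⁻¹) * vecL1 β) := by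
  have herror : β - Ω *ᵥ e = ((S *ᵥ β - e) - (S - Ω⁻¹) *ᵥ β) ᵥ* Ω := by
    have hresidual : (S *ᵥ β - e) - (S - Ω⁻¹) *ᵥ β = Ω⁻¹ *ᵥ β - e := by
      rw [sub_mulVec]
      abel
    rw [hresidual, ← mulVec_transpose, hΩsymm.eq, mulVec_sub, mulVec_mulVec,
      mul_nonsing_inv _ ((isUnit_iff_isUnit_det _).1 hΩ), one_mulVec]
  rw [herror]
  refine (vecLinf_vecMul_le _ _).trans (mul_le_mul_of_nonneg_left ?_ (matL1_nonneg Ω))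
  exact (vecLinf_sub_le _ _).trans (add_le_add_right (vecLinf_mulVec_le _ _) _)

end Perturbation

theorem scio_column_linf_bound_general {p : ℕ} {Ω S : Matrix (Fin p) (Fin p) ℝ}
    (hΩsymm : Ω.IsSymm) (hΩ : IsUnit Ω) (hS : S.IsSymm) {lam : ℝ}
    (hlam : 3 * matL1 Ω * matLinf (S - Ω⁻¹) ≤ lam) {e : Fin p → ℝ} (he : vecL1 e ≤ 1)
    {β : Fin p → ℝ} (hmin : ∀ γ, scioObj S e lam β ≤ scioObj S e lam γ) :
    vecLinf (β - Ω *ᵥ e) ≤ 5 / 3 * matL1 Ω * lam := by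
  have hL := matL1_nonneg Ω
  have hδ := matLinf_nonneg (S - Ω⁻¹)
  have hlam0 : 0 ≤ lam := le_trans (by positivity) hlam
  have htarget : vecL1 (Ω *ᵥ e) ≤ matL1 Ω :=
    (vecL1_mulVec_le Ω e).trans (mul_le_of_le_one_right hL he)
  have hgrad : vecLinf (S *ᵥ (Ω *ᵥ e) - e) ≤ lam / 3 := by
    have := mul_le_mul_of_nonneg_left htarget hδ
    linarith [vecLinf_mulVec_mulVec_sub_le hΩ S e]
  have hβ : lam * vecL1 β ≤ 2 * matL1 Ω * lam := by
    have hcmp := vecL1_sub_vecL1_le_of_scioObj_le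
      (posSemidef_of_scioObj_min hS hlam0 hmin) (hmin (Ω *ᵥ e))
    have hsum := mul_le_mul_of_nonneg_right hgrad
      (add_nonneg (vecL1_nonneg β) (vecL1_nonneg (Ω *ᵥ e)))
    linarith [mul_le_mul_of_nonneg_left htarget hlam0]
  calc vecLinf (β - Ω *ᵥ e)
      ≤ matL1 Ω * (vecLinf (S *ᵥ β - e) + matLinf (S - Ω⁻¹) * vecL1 β) :=
        vecLinf_sub_mulVec_le hΩsymm hΩ S e β
    _ ≤ matL1 Ω * (lam + matLinf (S - Ω⁻¹) * vecL1 β) := by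
        gcongr
        exact vecLinf_gradient_le_of_scioObj_min hS hlam0 hmin
    _ ≤ 5 / 3 * matL1 Ω * lam := by
        linarith [mul_le_mul_of_nonneg_right hlam (vecL1_nonneg β)]

/-- Theorem 1 (ℓ∞ bound): for Ω in the weak-sparsity class U_q(s_p, M_p), any global
minimizer β̂ of the SCIO objective with target column β* = Ω e_i satisfies
|β̂ − β*|_∞ ≤ 4 ‖Ω‖_{L1} λ. -/
theorem scio_column_linf_bound {p : ℕ} (q s M : ℝ) (hq0 : 0 ≤ q) (hq1 : q < 1)
    (hs : 0 < s) (hM : 0 < M)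
    (Ω : Matrix (Fin p) (Fin p) ℝ) (hΩsym : Ω.IsSymm) (hΩpd : Ω.PosDef)
    (hΩs : ∀ j, ∑ i, |Ω i j| ^ q ≤ s) (hΩM : matL1 Ω ≤ M)
    (Shat : Matrix (Fin p) (Fin p) ℝ) (hSsym : Shat.IsSymm)
    (lam : ℝ) (hlam0 : 0 ≤ lam)
    (hlam1 : 3 * matL1 Ω * matLinf (Shat - Ω⁻¹) ≤ lam)
    (hlam2 : (matL1 Ω) ^ (-q) * lam ^ (1 - q) * s ≤ 1 / 2)
    (i : Fin p) (βstar : Fin p → ℝ) (hβstar : βstar = Ω.mulVec (Pi.single i 1))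
    (βhat : Fin p → ℝ)
    (hmin : ∀ β : Fin p → ℝ,
      scioObj Shat (Pi.single i 1) lam βhat ≤ scioObj Shat (Pi.single i 1) lam β) :
    vecLinf (βhat - βstar) ≤ 4 * matL1 Ω * lam := by
  rw [hβstar]
  refine (scio_column_linf_bound_general hΩsym hΩpd.isUnit hSsym hlam1
    (by rw [vecL1_single, abs_one]) hmin).trans ?_
  linarith [mul_nonneg (matL1_nonneg Ω) hlam0]
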